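/- Let c' > 0 be a real number and let A ⊆ {0,1}^n have size |A| ≥ 2^{n−c'}, with indicator function f : {0,1}^n → {0,1}. Then for every integer ℓ with 1 ≤ ℓ ≤ 4c': (2^{2n} / |A|²) · ∑_{v ∈ {0,1}^n : wt(v) = ℓ} \hat{f}(v)² ≤ (4√2 · c' / ℓ)^ℓ, where wt(v) denotes the Hamming weight of v. -/

import Mathlib

open Finset

/-- The Fourier coefficient of `g : {0,1}^m → ℝ` at `v ∈ {0,1}^m`:
`ĝ(v) = 2^{-m} ∑_x g(x)·(−1)^{x·v}`. -/
noncomputable def booleanFourier {m : ℕ} (g : (Fin m → ZMod 2) → ℝ)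
    (v : Fin m → ZMod 2) : ℝ :=
  ((2 : ℝ) ^ m)⁻¹ * ∑ x : Fin m → ZMod 2, g x * (-1 : ℝ) ^ (∑ i, (x i).val * (v i).val)

/-!
By the hypercontractive inequality of Bonami and Beckner, `∑_v δ^{wt(v)} f̂(v)² ≤ ‖f‖_{1+δ}²` for
`0 ≤ δ ≤ 1`, and the right-hand side is at most `μ^{2/(1+δ)}` for every `f` with `|f| ≤ 1` and
`𝔼 |f| = μ`. Keeping only the terms with `wt(v) = ℓ` bounds the Fourier weight at level `ℓ` by
`δ^{-ℓ} μ^{2/(1+δ)}`, which is at most `μ² δ^{-ℓ} 2^{2c'δ}` if `μ ≥ 2^{-c'}`; now take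
`δ = ℓ / (4c')`. The hypercontractive inequality itself follows by induction on the dimension from
its two-point case.
-/

open scoped BigOperators

section TwoPoint

variable {δ y : ℝ}

lemma two_le_rpow_one_add_add_rpow_one_sub {s : ℝ} (hy : |y| < 1) (hs : s ≤ 0) :
    2 ≤ (1 + y) ^ s + (1 - y) ^ s := by
  obtain ⟨hy_gt, hy_lt⟩ := abs_lt.mp hy
  have pos_add : 0 < (1 + y) ^ s := Real.rpow_pos_of_pos (by linarith) _
  have pos_sub : 0 < (1 - y) ^ s := Real.rpow_pos_of_pos (by linarith) _
  have one_le_prod : 1 ≤ (1 + y) ^ s * (1 - y) ^ s := by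
    rw [← Real.mul_rpow (by linarith) (by linarith)]
    exact Real.one_le_rpow_of_pos_of_le_one_of_nonpos (by nlinarith)
      (by nlinarith [sq_nonneg y]) hs
  nlinarith [sq_nonneg ((1 + y) ^ s - (1 - y) ^ s)]

lemma two_mul_mul_le_rpow_one_add_sub_rpow_one_sub (hδ0 : 0 ≤ δ) (hδ1 : δ ≤ 1)
    (hy0 : 0 ≤ y) (hy1 : y < 1) :
    2 * δ * y ≤ (1 + y) ^ δ - (1 - y) ^ δ := by
  let ψ : ℝ → ℝ := fun z ↦ (1 + z) ^ δ - (1 - z) ^ δ - 2 * δ * z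
  have hasDerivAt_ψ : ∀ z ∈ Set.Ico (0 : ℝ) 1,
      HasDerivAt ψ (δ * ((1 + z) ^ (δ - 1) + (1 - z) ^ (δ - 1) - 2)) z := by
    rintro z ⟨hz0, hz1⟩
    have deriv_add := ((hasDerivAt_id z).const_add 1).rpow_const (p := δ)
      (.inl (by simp only [id]; linarith))
    have deriv_sub := ((hasDerivAt_id z).const_sub 1).rpow_const (p := δ)
      (.inl (by simp only [id]; linarith))
    refine ((deriv_add.sub deriv_sub).sub ((hasDerivAt_id z).const_mul (2 * δ))).congr_deriv ?_
    simp only [id]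
    ring
  have monotoneOn_ψ : MonotoneOn ψ (Set.Ico 0 1) := by
    refine monotoneOn_of_hasDerivWithinAt_nonneg (convex_Ico 0 1)
      (fun z hz ↦ (hasDerivAt_ψ z hz).continuousAt.continuousWithinAt)
      (fun z hz ↦ (hasDerivAt_ψ z (interior_subset hz)).hasDerivWithinAt) fun z hz ↦ ?_
    obtain ⟨hz0, hz1⟩ := interior_subset hz
    have two_le := two_le_rpow_one_add_add_rpow_one_sub (s := δ - 1)
      (abs_lt.mpr ⟨by linarith, hz1⟩) (by linarith)
    exact mul_nonneg hδ0 (by linarith)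
  have ψ_le : ψ 0 ≤ ψ y := monotoneOn_ψ ⟨le_rfl, one_pos⟩ ⟨hy0, hy1⟩ hy0
  simp only [ψ, add_zero, sub_zero, mul_zero, sub_self] at ψ_le
  linarith

lemma one_add_mul_sq_le_half_rpow_add_rpow_of_nonneg (hδ0 : 0 ≤ δ) (hδ1 : δ ≤ 1)
    (hy0 : 0 ≤ y) (hy1 : y ≤ 1) :
    1 + (1 + δ) / 2 * (δ * y ^ 2) ≤ ((1 + y) ^ (1 + δ) + (1 - y) ^ (1 + δ)) / 2 := by
  let φ : ℝ → ℝ := fun z ↦ (1 + z) ^ (1 + δ) + (1 - z) ^ (1 + δ) - (1 + δ) * δ * z ^ 2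
  have hasDerivAt_φ (z : ℝ) :
      HasDerivAt φ ((1 + δ) * ((1 + z) ^ δ - (1 - z) ^ δ - 2 * δ * z)) z := by
    have deriv_add := ((hasDerivAt_id z).const_add 1).rpow_const (p := 1 + δ)
      (.inr (by linarith))
    have deriv_sub := ((hasDerivAt_id z).const_sub 1).rpow_const (p := 1 + δ)
      (.inr (by linarith))
    refine ((deriv_add.add deriv_sub).sub
      (((hasDerivAt_id z).pow 2).const_mul ((1 + δ) * δ))).congr_deriv ?_
    simp only [id, add_sub_cancel_left, Nat.cast_ofNat, Nat.add_one_sub_one, pow_one]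
    ring
  have monotoneOn_φ : MonotoneOn φ (Set.Icc 0 1) := by
    refine monotoneOn_of_hasDerivWithinAt_nonneg (convex_Icc 0 1)
      (fun z _ ↦ (hasDerivAt_φ z).continuousAt.continuousWithinAt)
      (fun z _ ↦ (hasDerivAt_φ z).hasDerivWithinAt) fun z hz ↦ ?_
    rw [interior_Icc] at hz
    exact mul_nonneg (by linarith) (sub_nonneg.mpr
      (two_mul_mul_le_rpow_one_add_sub_rpow_one_sub hδ0 hδ1 hz.1.le hz.2))
  have φ_le : φ 0 ≤ φ y := monotoneOn_φ ⟨le_rfl, zero_le_one⟩ ⟨hy0, hy1⟩ hy0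
  simp only [φ, add_zero, sub_zero, Real.one_rpow] at φ_le
  linarith

lemma one_add_mul_sq_le_half_rpow_add_rpow (hδ0 : 0 ≤ δ) (hδ1 : δ ≤ 1) (hy : |y| ≤ 1) :
    1 + (1 + δ) / 2 * (δ * y ^ 2) ≤ ((1 + y) ^ (1 + δ) + (1 - y) ^ (1 + δ)) / 2 := by
  have at_abs := one_add_mul_sq_le_half_rpow_add_rpow_of_nonneg hδ0 hδ1 (abs_nonneg y) hy
  rw [sq_abs] at at_abs
  rcases abs_choice y with h | h
  · rwa [h] at at_abs
  · rwa [h, ← sub_eq_add_neg, sub_neg_eq_add, add_comm ((1 - y) ^ _)] at at_abs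

lemma one_add_mul_sq_le_sq_rpow_mean (hδ0 : 0 ≤ δ) (hδ1 : δ ≤ 1) (hy : |y| ≤ 1) :
    1 + δ * y ^ 2 ≤ ((((1 + y) ^ (1 + δ) + (1 - y) ^ (1 + δ)) / 2) ^ (1 + δ)⁻¹) ^ 2 := by
  set t := (1 + δ) / 2 * (δ * y ^ 2) with ht
  have t_nonneg : 0 ≤ t := by positivity
  have le_mean : 1 + t ≤ ((1 + y) ^ (1 + δ) + (1 - y) ^ (1 + δ)) / 2 :=
    one_add_mul_sq_le_half_rpow_add_rpow hδ0 hδ1 hy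
  have one_le_exponent : 1 ≤ (1 + δ)⁻¹ * (2 : ℕ) := by
    rw [Nat.cast_ofNat, inv_mul_eq_div, le_div_iff₀ (by positivity)]
    linarith
  calc 1 + δ * y ^ 2 = 1 + (1 + δ)⁻¹ * (2 : ℕ) * t := by
        rw [ht, Nat.cast_ofNat]
        field_simp
    _ ≤ (1 + t) ^ ((1 + δ)⁻¹ * (2 : ℕ)) :=
        one_add_mul_self_le_rpow_one_add (by linarith) one_le_exponent
    _ = ((1 + t) ^ (1 + δ)⁻¹) ^ 2 := Real.rpow_mul_natCast (by positivity) _ _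
    _ ≤ _ := by gcongr

lemma two_point_hypercontractivity (hδ0 : 0 ≤ δ) (hδ1 : δ ≤ 1) {a b : ℝ}
    (ha : 0 ≤ a) (hb : 0 ≤ b) :
    ((a + b) / 2) ^ 2 + δ * ((a - b) / 2) ^ 2
      ≤ (((a ^ (1 + δ) + b ^ (1 + δ)) / 2) ^ (1 + δ)⁻¹) ^ 2 := by
  rcases (add_nonneg ha hb).eq_or_lt with h_zero | h_pos
  · obtain rfl : a = 0 := by linarith
    obtain rfl : b = 0 := by linarith
    simpa using by positivity
  obtain ⟨x, y, hx, hy, rfl, rfl⟩ :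
      ∃ x y : ℝ, 0 < x ∧ |y| ≤ 1 ∧ a = x * (1 + y) ∧ b = x * (1 - y) := by
    refine ⟨(a + b) / 2, (a - b) / (a + b), by positivity, ?_, by field_simp; ring,
      by field_simp; ring⟩
    rw [abs_div, abs_of_pos h_pos, div_le_one h_pos, abs_le]
    constructor <;> linarith
  obtain ⟨hy_ge, hy_le⟩ := abs_le.mp hy
  have one_add_nonneg : 0 ≤ 1 + y := by linarith
  have one_sub_nonneg : 0 ≤ 1 - y := by linarith
  calc ((x * (1 + y) + x * (1 - y)) / 2) ^ 2 + δ * ((x * (1 + y) - x * (1 - y)) / 2) ^ 2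
      = x ^ 2 * (1 + δ * y ^ 2) := by ring
    _ ≤ x ^ 2 * ((((1 + y) ^ (1 + δ) + (1 - y) ^ (1 + δ)) / 2) ^ (1 + δ)⁻¹) ^ 2 := by
        gcongr
        exact one_add_mul_sq_le_sq_rpow_mean hδ0 hδ1 hy
    _ = _ := by
        rw [Real.mul_rpow hx.le one_add_nonneg, Real.mul_rpow hx.le one_sub_nonneg, ← mul_add,
          mul_div_assoc, Real.mul_rpow (by positivity) (by positivity),
          Real.rpow_rpow_inv hx.le (by positivity), mul_pow]

end TwoPoint

section Cube

variable {n : ℕ}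

/-- The `p`-norm of a function on the cube `{0,1}^n` with respect to the uniform probability
measure. -/
noncomputable def cubeLpNorm (p : ℝ) (f : (Fin n → ZMod 2) → ℝ) : ℝ :=
  (𝔼 x, |f x| ^ p) ^ p⁻¹

/-- The noise stability of `f` at correlation `δ`, given by its Fourier expansion; it equals
`‖T f‖₂²` for the noise operator `T` of parameter `√δ`. -/
noncomputable def noiseStability (δ : ℝ) (f : (Fin n → ZMod 2) → ℝ) : ℝ :=
  ∑ v, δ ^ hammingNorm v * booleanFourier f v ^ 2

/-- The Fourier weight of `f` at level `ℓ`. -/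
noncomputable def fourierWeight (ℓ : ℕ) (f : (Fin n → ZMod 2) → ℝ) : ℝ :=
  ∑ v with hammingNorm v = ℓ, booleanFourier f v ^ 2

lemma sum_cube_succ (F : (Fin (n + 1) → ZMod 2) → ℝ) :
    ∑ x, F x = ∑ x : Fin n → ZMod 2, F (Fin.cons 0 x) + ∑ x : Fin n → ZMod 2, F (Fin.cons 1 x) := by
  rw [← (Fin.consEquiv fun _ ↦ ZMod 2).sum_comp, Fintype.sum_prod_type]
  exact Fin.sum_univ_two fun a : Fin 2 ↦ ∑ x : Fin n → ZMod 2,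
    F (Fin.cons (α := fun _ ↦ ZMod 2) a x)

lemma expect_cube_eq_sum (F : (Fin n → ZMod 2) → ℝ) : 𝔼 x, F x = (2 ^ n)⁻¹ * ∑ x, F x := by
  simp [Fintype.expect_eq_sum_div_card, ZMod.card, div_eq_inv_mul]

lemma expect_cube_succ (F : (Fin (n + 1) → ZMod 2) → ℝ) :
    𝔼 x, F x
      = (𝔼 x : Fin n → ZMod 2, F (Fin.cons 0 x) + 𝔼 x : Fin n → ZMod 2, F (Fin.cons 1 x)) / 2 := by
  simp only [expect_cube_eq_sum, sum_cube_succ, pow_succ]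
  field_simp

lemma booleanFourier_eq_expect (f : (Fin n → ZMod 2) → ℝ) (v : Fin n → ZMod 2) :
    booleanFourier f v = 𝔼 x, f x * (-1) ^ (∑ i, (x i).val * (v i).val) :=
  (expect_cube_eq_sum _).symm

lemma booleanFourier_cons_zero (f : (Fin (n + 1) → ZMod 2) → ℝ) (v : Fin n → ZMod 2) :
    booleanFourier f (Fin.cons 0 v) = (booleanFourier (fun x ↦ f (Fin.cons 0 x)) v
      + booleanFourier (fun x ↦ f (Fin.cons 1 x)) v) / 2 := by
  simp [booleanFourier_eq_expect, expect_cube_succ, Fin.sum_univ_succ]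

lemma booleanFourier_cons_one (f : (Fin (n + 1) → ZMod 2) → ℝ) (v : Fin n → ZMod 2) :
    booleanFourier f (Fin.cons 1 v) = (booleanFourier (fun x ↦ f (Fin.cons 0 x)) v
      - booleanFourier (fun x ↦ f (Fin.cons 1 x)) v) / 2 := by
  simp [booleanFourier_eq_expect, expect_cube_succ, Fin.sum_univ_succ, ZMod.val_one, pow_add,
    expect_neg_distrib, sub_eq_add_neg]

lemma hammingNorm_cons_zero (v : Fin n → ZMod 2) :
    hammingNorm (Fin.cons 0 v : Fin (n + 1) → ZMod 2) = hammingNorm v := by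
  simp [hammingNorm, card_filter, Fin.sum_univ_succ]

lemma hammingNorm_cons_one (v : Fin n → ZMod 2) :
    hammingNorm (Fin.cons 1 v : Fin (n + 1) → ZMod 2) = hammingNorm v + 1 := by
  simp [hammingNorm, card_filter, Fin.sum_univ_succ, add_comm]

lemma cubeLpNorm_nonneg (p : ℝ) (f : (Fin n → ZMod 2) → ℝ) : 0 ≤ cubeLpNorm p f :=
  Real.rpow_nonneg (expect_nonneg fun _ _ ↦ by positivity) _

lemma cubeLpNorm_rpow {p : ℝ} (hp : p ≠ 0) (f : (Fin n → ZMod 2) → ℝ) :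
    cubeLpNorm p f ^ p = 𝔼 x, |f x| ^ p :=
  Real.rpow_inv_rpow (expect_nonneg fun _ _ ↦ by positivity) hp

lemma cubeLpNorm_succ {p : ℝ} (hp : p ≠ 0) (f : (Fin (n + 1) → ZMod 2) → ℝ) :
    cubeLpNorm p f = ((cubeLpNorm p (fun x ↦ f (Fin.cons 0 x)) ^ p
      + cubeLpNorm p (fun x ↦ f (Fin.cons 1 x)) ^ p) / 2) ^ p⁻¹ := by
  rw [cubeLpNorm_rpow hp, cubeLpNorm_rpow hp, cubeLpNorm, expect_cube_succ]

lemma noiseStability_succ (δ : ℝ) (f : (Fin (n + 1) → ZMod 2) → ℝ) :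
    noiseStability δ f
      = (1 + δ) / 4 * (noiseStability δ (fun x ↦ f (Fin.cons 0 x))
          + noiseStability δ (fun x ↦ f (Fin.cons 1 x)))
        + (1 - δ) / 2 * ∑ v, δ ^ hammingNorm v *
          (booleanFourier (fun x ↦ f (Fin.cons 0 x)) v
            * booleanFourier (fun x ↦ f (Fin.cons 1 x)) v) := by
  simp only [noiseStability, sum_cube_succ, hammingNorm_cons_zero, hammingNorm_cons_one,
    booleanFourier_cons_zero, booleanFourier_cons_one, mul_sum, ← sum_add_distrib]
  exact sum_congr rfl fun v _ ↦ by ring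

variable {δ : ℝ}

lemma noiseStability_nonneg (hδ : 0 ≤ δ) (f : (Fin n → ZMod 2) → ℝ) : 0 ≤ noiseStability δ f :=
  sum_nonneg fun _ _ ↦ by positivity

lemma sq_sum_pow_hammingNorm_mul_le (hδ : 0 ≤ δ) (f g : (Fin n → ZMod 2) → ℝ) :
    (∑ v, δ ^ hammingNorm v * (booleanFourier f v * booleanFourier g v)) ^ 2
      ≤ noiseStability δ f * noiseStability δ g :=
  sum_sq_le_sum_mul_sum_of_sq_le_mul _ (fun _ _ ↦ by positivity) (fun _ _ ↦ by positivity)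
    fun _ _ ↦ by apply le_of_eq; ring

lemma noiseStability_succ_le (hδ0 : 0 ≤ δ) (hδ1 : δ ≤ 1) (f : (Fin (n + 1) → ZMod 2) → ℝ)
    {a b : ℝ} (ha : 0 ≤ a) (hb : 0 ≤ b)
    (hfa : noiseStability δ (fun x ↦ f (Fin.cons 0 x)) ≤ a ^ 2)
    (hfb : noiseStability δ (fun x ↦ f (Fin.cons 1 x)) ≤ b ^ 2) :
    noiseStability δ f ≤ ((a + b) / 2) ^ 2 + δ * ((a - b) / 2) ^ 2 := by
  have cross_le : ∑ v, δ ^ hammingNorm v * (booleanFourier (fun x ↦ f (Fin.cons 0 x)) v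
      * booleanFourier (fun x ↦ f (Fin.cons 1 x)) v) ≤ a * b := by
    refine le_of_sq_le_sq ?_ (mul_nonneg ha hb)
    rw [mul_pow]
    exact (sq_sum_pow_hammingNorm_mul_le hδ0 _ _).trans
      (mul_le_mul hfa hfb (noiseStability_nonneg hδ0 _) (sq_nonneg a))
  calc noiseStability δ f ≤ (1 + δ) / 4 * (a ^ 2 + b ^ 2) + (1 - δ) / 2 * (a * b) := by
        rw [noiseStability_succ]
        have : 0 ≤ 1 - δ := by linarith
        gcongr
    _ = _ := by ring

theorem noiseStability_le_sq_cubeLpNorm (hδ0 : 0 ≤ δ) (hδ1 : δ ≤ 1)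
    (f : (Fin n → ZMod 2) → ℝ) :
    noiseStability δ f ≤ cubeLpNorm (1 + δ) f ^ 2 := by
  have exponent_ne_zero : 1 + δ ≠ 0 := by positivity
  induction n with
  | zero =>
    simp [noiseStability, cubeLpNorm, booleanFourier, hammingNorm,
      Real.rpow_rpow_inv (abs_nonneg _) exponent_ne_zero]
  | succ n ih =>
    rw [cubeLpNorm_succ exponent_ne_zero]
    exact (noiseStability_succ_le hδ0 hδ1 f (cubeLpNorm_nonneg _ _) (cubeLpNorm_nonneg _ _)
      (ih _) (ih _)).trans
      (two_point_hypercontractivity hδ0 hδ1 (cubeLpNorm_nonneg _ _) (cubeLpNorm_nonneg _ _))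

lemma pow_mul_fourierWeight_le_noiseStability (hδ : 0 ≤ δ) (ℓ : ℕ) (f : (Fin n → ZMod 2) → ℝ) :
    δ ^ ℓ * fourierWeight ℓ f ≤ noiseStability δ f := by
  calc δ ^ ℓ * fourierWeight ℓ f
      = ∑ v with hammingNorm v = ℓ, δ ^ hammingNorm v * booleanFourier f v ^ 2 := by
        rw [fourierWeight, mul_sum]
        exact sum_congr rfl fun v hv ↦ by rw [(mem_filter.mp hv).2]
    _ ≤ noiseStability δ f :=
        sum_le_sum_of_subset_of_nonneg (filter_subset _ _) fun _ _ _ ↦ by positivity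

lemma cubeLpNorm_le_expect_abs_rpow_inv {p : ℝ} (hp : 1 ≤ p) {f : (Fin n → ZMod 2) → ℝ}
    (hf : ∀ x, |f x| ≤ 1) : cubeLpNorm p f ≤ (𝔼 x, |f x|) ^ p⁻¹ := by
  refine Real.rpow_le_rpow (expect_nonneg fun _ _ ↦ by positivity)
    (expect_le_expect fun x _ ↦ ?_) (by positivity)
  exact Real.rpow_le_self_of_le_one (abs_nonneg _) (hf x) hp

end Cube

lemma sq_rpow_inv_one_add_le {μ c δ : ℝ} (hc : 0 ≤ c) (hμ : (2 : ℝ) ^ (-c) ≤ μ) (hδ : 0 ≤ δ) :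
    (μ ^ (1 + δ)⁻¹) ^ 2 ≤ μ ^ 2 * 2 ^ (2 * c * δ) := by
  have μ_pos : 0 < μ := lt_of_lt_of_le (by positivity) hμ
  have exponent_eq : (1 + δ)⁻¹ = 1 + -(δ / (1 + δ)) := by field_simp; ring
  have rpow_neg_le : μ ^ (-(δ / (1 + δ))) ≤ 2 ^ (c * δ) := by
    calc μ ^ (-(δ / (1 + δ))) ≤ ((2 : ℝ) ^ (-c)) ^ (-(δ / (1 + δ))) :=
          Real.rpow_le_rpow_of_nonpos (by positivity) hμ (neg_nonpos.mpr (by positivity))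
      _ = 2 ^ (c * (δ / (1 + δ))) := by rw [← Real.rpow_mul zero_le_two, neg_mul_neg]
      _ ≤ 2 ^ (c * δ) := by
          gcongr
          · exact one_le_two
          · exact div_le_self hδ (by linarith)
  calc (μ ^ (1 + δ)⁻¹) ^ 2 = μ ^ 2 * (μ ^ (-(δ / (1 + δ)))) ^ 2 := by
        rw [exponent_eq, Real.rpow_add μ_pos, Real.rpow_one, mul_pow]
    _ ≤ μ ^ 2 * (2 ^ (c * δ)) ^ 2 := by gcongr
    _ = μ ^ 2 * 2 ^ (2 * c * δ) := by
        rw [← Real.rpow_mul_natCast zero_le_two]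
        congr 2
        push_cast
        ring

lemma pow_mul_fourierWeight_le_sq_expect_abs_mul_rpow {n : ℕ} {c δ : ℝ} (hc : 0 ≤ c)
    (hδ0 : 0 ≤ δ) (hδ1 : δ ≤ 1) {f : (Fin n → ZMod 2) → ℝ} (hf : ∀ x, |f x| ≤ 1)
    (hfc : (2 : ℝ) ^ (-c) ≤ 𝔼 x, |f x|) (ℓ : ℕ) :
    δ ^ ℓ * fourierWeight ℓ f ≤ (𝔼 x, |f x|) ^ 2 * 2 ^ (2 * c * δ) :=
  calc δ ^ ℓ * fourierWeight ℓ f ≤ noiseStability δ f :=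
        pow_mul_fourierWeight_le_noiseStability hδ0 ℓ f
    _ ≤ cubeLpNorm (1 + δ) f ^ 2 := noiseStability_le_sq_cubeLpNorm hδ0 hδ1 f
    _ ≤ ((𝔼 x, |f x|) ^ (1 + δ)⁻¹) ^ 2 :=
        pow_le_pow_left₀ (cubeLpNorm_nonneg _ _)
          (cubeLpNorm_le_expect_abs_rpow_inv (by linarith) hf) 2
    _ ≤ (𝔼 x, |f x|) ^ 2 * 2 ^ (2 * c * δ) := sq_rpow_inv_one_add_le hc hfc hδ0

theorem fourierWeight_le_sq_expect_abs_mul_pow {n : ℕ} {c : ℝ} {f : (Fin n → ZMod 2) → ℝ}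
    (hf : ∀ x, |f x| ≤ 1) (hfc : (2 : ℝ) ^ (-c) ≤ 𝔼 x, |f x|)
    {ℓ : ℕ} (hℓ1 : 1 ≤ ℓ) (hℓc : (ℓ : ℝ) ≤ 4 * c) :
    fourierWeight ℓ f ≤ (𝔼 x, |f x|) ^ 2 * (4 * √2 * c / ℓ) ^ ℓ := by
  have ℓ_pos : (0 : ℝ) < ℓ := by exact_mod_cast hℓ1
  have c_pos : 0 < c := by linarith
  have δ_pos : 0 < ℓ / (4 * c) := by positivity
  have weighted := pow_mul_fourierWeight_le_sq_expect_abs_mul_rpow c_pos.le δ_pos.le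
    ((div_le_one (by positivity)).mpr hℓc) hf hfc ℓ
  have two_rpow_eq : (2 : ℝ) ^ (2 * c * (ℓ / (4 * c))) = √2 ^ ℓ := by
    rw [Real.sqrt_eq_rpow, ← Real.rpow_mul_natCast zero_le_two]
    congr 1
    field_simp
    norm_num
  have base_eq : 4 * √2 * c / ℓ = √2 / (ℓ / (4 * c)) := by field_simp
  rwa [base_eq, div_pow, mul_div_assoc', le_div_iff₀' (by positivity), ← two_rpow_eq]

theorem stmt6_general (n : ℕ) (c' : ℝ) (f : (Fin n → ZMod 2) → ℝ) (hf : ∀ x, |f x| ≤ 1)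
    (hfc : (2 : ℝ) ^ ((n : ℝ) - c') ≤ ∑ x, |f x|)
    (ℓ : ℕ) (hℓ1 : 1 ≤ ℓ) (hℓ2 : (ℓ : ℝ) ≤ 4 * c') :
    (2 : ℝ) ^ (2 * n) / (∑ x, |f x|) ^ 2 * ∑ v with hammingNorm v = ℓ, booleanFourier f v ^ 2
      ≤ (4 * √2 * c' / ℓ) ^ ℓ := by
  have sum_pos : 0 < ∑ x, |f x| := lt_of_lt_of_le (by positivity) hfc
  have density_ge : (2 : ℝ) ^ (-c') ≤ 𝔼 x, |f x| := by
    rwa [expect_cube_eq_sum, le_inv_mul_iff₀ (by positivity), ← Real.rpow_natCast,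
      ← Real.rpow_add two_pos, ← sub_eq_add_neg]
  have weight_le := fourierWeight_le_sq_expect_abs_mul_pow hf density_ge hℓ1 hℓ2
  rw [expect_cube_eq_sum, fourierWeight] at weight_le
  calc (2 : ℝ) ^ (2 * n) / (∑ x, |f x|) ^ 2 * ∑ v with hammingNorm v = ℓ, booleanFourier f v ^ 2
      ≤ (2 : ℝ) ^ (2 * n) / (∑ x, |f x|) ^ 2 *
          (((2 ^ n)⁻¹ * ∑ x, |f x|) ^ 2 * (4 * √2 * c' / ℓ) ^ ℓ) := by gcongr
    _ = (4 * √2 * c' / ℓ) ^ ℓ := by field_simp; ring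

/-- for `c' > 0` real, `A ⊆ {0,1}^n` with `|A| ≥ 2^{n−c'}` and indicator `f`,
and every integer `ℓ` with `1 ≤ ℓ ≤ 4c'`:
`(2^{2n}/|A|²) ∑_{wt(v)=ℓ} f̂(v)² ≤ (4√2·c'/ℓ)^ℓ`. -/
theorem stmt6 (n : ℕ) (c' : ℝ) (hc' : 0 < c')
    (A : Finset (Fin n → ZMod 2)) (hA : (2 : ℝ) ^ ((n : ℝ) - c') ≤ (A.card : ℝ))
    (ℓ : ℕ) (hℓ1 : 1 ≤ ℓ) (hℓ2 : (ℓ : ℝ) ≤ 4 * c') :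
    (2 : ℝ) ^ (2 * n) / (A.card : ℝ) ^ 2 *
        ∑ v ∈ univ.filter
            (fun v : Fin n → ZMod 2 => (univ.filter (fun i => v i ≠ 0)).card = ℓ),
          booleanFourier (fun x : Fin n → ZMod 2 => if x ∈ A then (1 : ℝ) else 0) v ^ 2
      ≤ (4 * Real.sqrt 2 * c' / (ℓ : ℝ)) ^ ℓ := by
  have sum_abs_indicator : ∑ x, |if x ∈ A then (1 : ℝ) else 0| = A.card := by simp [apply_ite abs]
  rw [← sum_abs_indicator] at hA ⊢
  exact stmt6_general n c' _ (fun x ↦ by split_ifs <;> simp) hA ℓ hℓ1 hℓ2
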